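/- Let p be any prime number. Then the 2-primary part (Sylow 2-subgroup) of the ideal class group of the pure quartic field K = ℚ(⁴√p) is a cyclic group. -/

import Mathlib

open Polynomial NumberField

/-!
Let `Sel(F)` denote the `2`-Selmer group of a number field `F`: the classes in `Fˣ/Fˣ²` with even
valuation at every prime. The exact sequence `1 → 𝓞ˣ/𝓞ˣ² → Sel(F) → Cl(F)[2] → 1` gives
`|Sel(F)| = 2 ^ (rank + 1) * |Cl(F)[2]|`, so a bound on `Sel(F)` is a bound on the class group.

For a quadratic extension `L = F(√r)` with `r` prime, the norm maps `Sel(L)` to `Sel(F)`, and its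
kernel comes from `Fˣ/Fˣ²`. After multiplication by `r` if necessary, an element of `Fˣ` giving a
class in `Sel(L)` has even valuation at `r` and at all unramified primes, hence everywhere outside
the primes above `2` that ramify. If there is no such prime, or if there is at most one and `-1` is
not a norm from `L`, this yields `|Sel(L)| ≤ |Sel(F)| ^ 2`, the missing norm `-1` compensating for
the ramified prime. Climbing `ℚ ⊂ ℚ(√p) ⊂ K` one finds the bounds `2`, `4`, `16`. As `K` has two
real places and one complex place, its unit rank is `2`, and so `|Cl(K)[2]| ≤ 2`.
-/

open IsDedekindDomain WithZero
open scoped nonZeroDivisors IntermediateField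

theorem card_ker_powMonoidHom_pow_le {G : Type*} [CommGroup G] [Finite G] {q : ℕ}
    (h : Nat.card (powMonoidHom q : G →* G).ker ≤ q) (n : ℕ) :
    Nat.card (powMonoidHom (q ^ n) : G →* G).ker ≤ q ^ n := by
  induction n with
  | zero => simp
  | succ n ih =>
    let f : (powMonoidHom (q ^ (n + 1)) : G →* G).ker →* (powMonoidHom q : G →* G).ker :=
      ((powMonoidHom (q ^ n)).comp (Subgroup.subtype _)).codRestrict _ fun x ↦ by
        simpa [pow_succ, pow_mul] using x.2
    have hf : Nat.card f.ker ≤ Nat.card (powMonoidHom (q ^ n) : G →* G).ker :=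
      Nat.card_le_card_of_injective
        (fun x ↦ ⟨x, by simpa [f, MonoidHom.mem_ker, Subtype.ext_iff] using x.2⟩)
        fun x y hxy ↦ Subtype.ext (Subtype.ext (by simpa using hxy))
    calc Nat.card (powMonoidHom (q ^ (n + 1)) : G →* G).ker
        = Nat.card f.ker * Nat.card f.range := by
          rw [← f.ker.card_mul_index, Subgroup.index_ker]
      _ ≤ q ^ n * q := Nat.mul_le_mul (hf.trans ih) ((Subgroup.card_le_card_group _).trans h)
      _ = q ^ (n + 1) := (pow_succ q n).symm

theorem sylow_isCyclic_of_card_ker_powMonoidHom_le {G : Type*} [CommGroup G] [Finite G] {q : ℕ}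
    [hq : Fact q.Prime] (h : Nat.card (powMonoidHom q : G →* G).ker ≤ q) (P : Sylow q G) :
    IsCyclic P := by
  classical
  have := Fintype.ofFinite P
  refine isCyclic_of_card_pow_eq_one_le fun m hm ↦ ?_
  obtain ⟨N, hN⟩ := IsPGroup.iff_card.mp P.isPGroup'
  obtain ⟨j, -, hj⟩ := (Nat.dvd_prime_pow hq.out).mp (Nat.gcd_dvd_right m (q ^ N))
  have hpow (x : P) (hx : x ^ m = 1) : x ^ q ^ j = 1 := by
    rw [← hj, ← orderOf_dvd_iff_pow_eq_one]
    exact Nat.dvd_gcd (orderOf_dvd_of_pow_eq_one hx) (hN ▸ orderOf_dvd_natCard x)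
  calc _ = Nat.card {x : P // x ^ m = 1} := (Nat.subtype_card _ (by simp)).symm
    _ ≤ Nat.card (powMonoidHom (q ^ j) : G →* G).ker :=
        Nat.card_le_card_of_injective
          (fun x ↦ ⟨x, by simpa using congrArg Subtype.val (hpow x x.2)⟩)
          fun x y hxy ↦ Subtype.ext (Subtype.ext (by simpa using hxy))
    _ ≤ q ^ j := card_ker_powMonoidHom_pow_le h j
    _ ≤ m := hj ▸ Nat.gcd_le_left _ hm

/-- The group of `n`-th power classes of `G`; for `G = Kˣ` this is the ambient group of
`IsDedekindDomain.selmerGroup`. -/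
abbrev PowerClass (G : Type*) [CommGroup G] (n : ℕ) : Type _ := G ⧸ (powMonoidHom n : G →* G).range

section Valuation

variable {R K : Type*} [CommRing R] [IsDedekindDomain R] [Field K] [Algebra R K]
  [IsFractionRing R K] {n : ℕ}

theorem valuationOfNeZeroMod_mk (v : HeightOneSpectrum R) (x : Kˣ) :
    v.valuationOfNeZeroMod n (x : PowerClass Kˣ n) =
      Multiplicative.ofAdd ((v.valuationOfNeZero x).toAdd : ZMod n) := rfl

theorem valuationOfNeZeroMod_mk_eq_one_iff (v : HeightOneSpectrum R) (x : Kˣ) :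
    v.valuationOfNeZeroMod n (x : PowerClass Kˣ n) = 1 ↔
      (n : ℤ) ∣ (v.valuationOfNeZero x).toAdd := by
  rw [valuationOfNeZeroMod_mk, ← ZMod.intCast_zmod_eq_zero_iff_dvd]
  rfl

open scoped Classical in
theorem toAdd_valuationOfNeZero_of_eq_algebraMap (v : HeightOneSpectrum R) {x : Kˣ} {b : R}
    (hx : (x : K) = algebraMap R K b) :
    (v.valuationOfNeZero x).toAdd =
      -((Associates.mk v.asIdeal).count (Associates.mk (Ideal.span {b})).factors : ℤ) := by
  have hb : b ≠ 0 := by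
    rintro rfl
    simp at hx
  have h := v.valuationOfNeZero_eq x
  rw [hx, v.valuation_of_algebraMap, v.intValuation_if_neg hb] at h
  exact WithZero.coe_injective h

open scoped Classical in
theorem exists_eq_pow_iff_forall_dvd_count {I : Ideal R} (hI : I ≠ ⊥) :
    (∃ J : Ideal R, I = J ^ n) ↔
      ∀ v : HeightOneSpectrum R, n ∣ (Associates.mk v.asIdeal).count (Associates.mk I).factors := by
  constructor
  · rintro ⟨J, rfl⟩ v
    obtain rfl | hn := eq_or_ne n 0
    · simp [-Ideal.one_eq_top, Associates.count_zero v.associates_irreducible]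
    have hJ : Associates.mk J ≠ 0 := Associates.mk_ne_zero.mpr (ne_zero_pow hn hI)
    rw [Associates.mk_pow, Associates.count_pow hJ v.associates_irreducible]
    exact dvd_mul_right _ _
  · intro h
    obtain ⟨J, hJ⟩ := Associates.is_pow_of_dvd_count (Associates.mk_ne_zero.mpr hI) fun P hP ↦ by
      obtain ⟨P, rfl⟩ := Associates.mk_surjective P
      have hP' : Prime P := (Associates.irreducible_mk.mp hP).prime
      exact h ⟨P, Ideal.isPrime_of_prime hP', hP'.ne_zero⟩
    obtain ⟨J, rfl⟩ := Associates.mk_surjective J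
    rw [← Associates.mk_pow] at hJ
    exact ⟨J, associated_iff_eq.mp (Associates.mk_eq_mk_iff_associated.mp hJ)⟩

theorem PowerClass.exists_integral_rep (hn : n ≠ 0) (x : PowerClass Kˣ n) :
    ∃ (b : R) (y : Kˣ), (y : K) = algebraMap R K b ∧ (y : PowerClass Kˣ n) = x := by
  obtain ⟨y, rfl⟩ := QuotientGroup.mk_surjective x
  obtain ⟨b, c, hc, hbc⟩ := IsFractionRing.div_surjective R (y : K)
  have hc' : algebraMap R K c ≠ 0 := by simpa using nonZeroDivisors.ne_zero hc
  let u := Units.mk0 _ hc'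
  refine ⟨b * c ^ (n - 1), y * u ^ n, ?_, ?_⟩
  · obtain ⟨m, rfl⟩ := Nat.exists_eq_succ_of_ne_zero hn
    simp only [u, ← hbc, Nat.succ_eq_add_one, add_tsub_cancel_right, map_mul, map_pow,
      Units.val_mul, Units.val_pow_eq_pow_val, Units.val_mk0]
    field_simp
    ring
  · exact QuotientGroup.mk_mul_of_mem _ ⟨u, rfl⟩

theorem mk_mem_selmerGroup_empty_iff {x : Kˣ} {b : R} (hx : (x : K) = algebraMap R K b) :
    (x : PowerClass Kˣ n) ∈ selmerGroup (R := R) (K := K) (S := ∅) (n := n) ↔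
      ∃ I : Ideal R, Ideal.span {b} = I ^ n := by
  classical
  have hb : Ideal.span {b} ≠ ⊥ := by
    rw [Ne, Ideal.span_singleton_eq_bot]
    rintro rfl
    simp at hx
  rw [exists_eq_pow_iff_forall_dvd_count hb]
  refine forall_congr' fun v ↦ ?_
  simp only [Set.mem_empty_iff_false, not_false_eq_true, forall_const]
  rw [valuationOfNeZeroMod_mk_eq_one_iff, toAdd_valuationOfNeZero_of_eq_algebraMap v hx, dvd_neg,
    Int.natCast_dvd_natCast]

end Valuation

section ClassGroup

variable (R K : Type*) [CommRing R] [IsDedekindDomain R] [Field K] [Algebra R K]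
  [IsFractionRing R K] {n : ℕ}

/-- `c` is the class of an ideal `I` with `Iⁿ = (b)`, where `b ∈ R` represents `x`. -/
def IsRootClass (x : PowerClass Kˣ n) (c : ClassGroup R) : Prop :=
  ∃ (y : Kˣ) (b : R) (I : (Ideal R)⁰), (y : K) = algebraMap R K b ∧ (y : PowerClass Kˣ n) = x ∧
    Ideal.span {b} = I ^ n ∧ ClassGroup.mk0 I = c

variable {R K}

omit [IsFractionRing R K] in
theorem IsRootClass.mul {x x' : PowerClass Kˣ n} {c c' : ClassGroup R}
    (h : IsRootClass R K x c) (h' : IsRootClass R K x' c') : IsRootClass R K (x * x') (c * c') := by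
  obtain ⟨y, b, I, hy, rfl, hI, rfl⟩ := h
  obtain ⟨y', b', I', hy', rfl, hI', rfl⟩ := h'
  exact ⟨y * y', b * b', I * I', by simp [hy, hy'], rfl,
    by rw [← Ideal.span_singleton_mul_span_singleton, hI, hI', Submonoid.coe_mul, mul_pow],
    map_mul _ _ _⟩

theorem IsRootClass.exists (hn : n ≠ 0) {x : PowerClass Kˣ n}
    (hx : x ∈ selmerGroup (R := R) (S := ∅)) : ∃ c, IsRootClass R K x c := by
  obtain ⟨b, y, hy, rfl⟩ := PowerClass.exists_integral_rep (R := R) hn x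
  obtain ⟨I, hI⟩ := (mk_mem_selmerGroup_empty_iff hy).mp hx
  have hb : b ≠ 0 := by
    rintro rfl
    simp at hy
  have hI0 : I ≠ ⊥ := by
    rintro rfl
    rw [← Ideal.zero_eq_bot, zero_pow hn] at hI
    exact hb (by simpa using hI)
  exact ⟨_, y, b, ⟨I, mem_nonZeroDivisors_of_ne_zero hI0⟩, hy, rfl, hI, rfl⟩

theorem IsRootClass.unique (hn : n ≠ 0) {x : PowerClass Kˣ n} {c c' : ClassGroup R}
    (h : IsRootClass R K x c) (h' : IsRootClass R K x c') : c = c' := by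
  obtain ⟨y, b, I, hy, rfl, hI, rfl⟩ := h
  obtain ⟨y', b', I', hy', hyy', hI', rfl⟩ := h'
  obtain ⟨z, hz⟩ := QuotientGroup.eq.mp hyy'
  obtain ⟨s, t, ht, hst⟩ := IsFractionRing.div_surjective R (z : K)
  have ht0 : t ≠ 0 := nonZeroDivisors.ne_zero ht
  have hs0 : s ≠ 0 := by
    rintro rfl
    exact z.ne_zero (by simp [← hst])
  have hbb : b * t ^ n = b' * s ^ n := by
    apply IsFractionRing.injective R K
    have hzn : (y' : K) * z ^ n = y := congrArg Units.val (eq_inv_mul_iff_mul_eq.mp hz)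
    have ht' : algebraMap R K t ≠ 0 := by simpa using ht0
    rw [← hst, div_pow, mul_div_assoc', div_eq_iff (pow_ne_zero n ht')] at hzn
    rw [map_mul, map_mul, map_pow, map_pow, ← hy, ← hy', ← hzn]
  refine (ClassGroup.mk0_eq_mk0_iff).mpr ⟨t, s, ht0, hs0, pow_left_injective hn ?_⟩
  simp only [mul_pow, ← hI, ← hI', Ideal.span_singleton_pow,
    Ideal.span_singleton_mul_span_singleton]
  rw [mul_comm, hbb, mul_comm]

theorem IsRootClass.eq_one_iff (hn : n ≠ 0) {x : PowerClass Kˣ n} {c : ClassGroup R}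
    (h : IsRootClass R K x c) :
    c = 1 ↔ ∃ u : Rˣ, (Units.map (algebraMap R K : R →* K) u : PowerClass Kˣ n) = x := by
  constructor
  · rintro rfl
    obtain ⟨y, b, I, hy, rfl, hI, hc⟩ := h
    obtain ⟨g, hg⟩ := ((ClassGroup.mk0_eq_one_iff I.2).mp hc).principal
    rw [hg, Ideal.submodule_span_eq, Ideal.span_singleton_pow,
      Ideal.span_singleton_eq_span_singleton] at hI
    obtain ⟨u, hu⟩ := hI.symm
    have hg0 : algebraMap R K g ≠ 0 := by
      have := nonZeroDivisors.ne_zero I.2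
      rw [hg] at this
      simpa using this
    have hpow : Units.mk0 _ hg0 ^ n ∈ (powMonoidHom n : Kˣ →* Kˣ).range := ⟨_, rfl⟩
    refine ⟨u, (QuotientGroup.mk_mul_of_mem _ hpow).symm.trans ?_⟩
    congr 1
    ext
    simp [hy, ← hu, mul_comm]
  · rintro ⟨u, rfl⟩
    exact h.unique hn ⟨_, u, 1, rfl, rfl,
      by simp [Ideal.span_singleton_eq_top.mpr u.isUnit, Ideal.top_pow], map_one _⟩

variable (R K) in
/-- The homomorphism from the Selmer group `K⟮∅, n⟯` to the class group, taking the class of `b` to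
the class of the ideal `I` with `Iⁿ = (b)`. -/
noncomputable def selmerToClassGroup (hn : n ≠ 0) :
    selmerGroup (R := R) (K := K) (S := ∅) (n := n) →* ClassGroup R :=
  MonoidHom.mk' (fun x ↦ (IsRootClass.exists hn x.2).choose) fun x y ↦
    (IsRootClass.exists hn (x * y).2).choose_spec.unique hn
      ((IsRootClass.exists hn x.2).choose_spec.mul (IsRootClass.exists hn y.2).choose_spec)

theorem isRootClass_selmerToClassGroup (hn : n ≠ 0)
    (x : selmerGroup (R := R) (K := K) (S := ∅) (n := n)) :
    IsRootClass R K x.1 (selmerToClassGroup R K hn x) :=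
  (IsRootClass.exists hn x.2).choose_spec

theorem ker_selmerToClassGroup (hn : n ≠ 0) :
    (selmerToClassGroup R K hn).ker = (selmerGroup.fromUnit (R := R) (K := K) (n := n)).range := by
  ext x
  rw [MonoidHom.mem_ker, (isRootClass_selmerToClassGroup hn x).eq_one_iff hn, MonoidHom.mem_range]
  exact exists_congr fun u ↦ ⟨fun h ↦ Subtype.ext h, congrArg Subtype.val⟩

theorem range_selmerToClassGroup (hn : n ≠ 0) :
    (selmerToClassGroup R K hn).range = (powMonoidHom n : ClassGroup R →* ClassGroup R).ker := by
  ext c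
  rw [MonoidHom.mem_ker, powMonoidHom_apply, MonoidHom.mem_range]
  constructor
  · rintro ⟨x, rfl⟩
    obtain ⟨y, b, I, -, -, hI, hc⟩ := isRootClass_selmerToClassGroup hn x
    rw [← hc, ← map_pow]
    exact (ClassGroup.mk0_eq_one_iff (I ^ n).2).mpr ⟨b, by simpa using hI.symm⟩
  · intro hc
    obtain ⟨I, rfl⟩ := ClassGroup.mk0_surjective c
    rw [← map_pow] at hc
    obtain ⟨b, hb⟩ := ((ClassGroup.mk0_eq_one_iff (I ^ n).2).mp hc).principal
    have hb0 : algebraMap R K b ≠ 0 := by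
      have := nonZeroDivisors.ne_zero (I ^ n).2
      rw [hb] at this
      simpa using this
    have hI : Ideal.span {b} = (I : Ideal R) ^ n := by simpa using hb.symm
    let x : selmerGroup (R := R) (K := K) (S := ∅) (n := n) :=
      ⟨(Units.mk0 _ hb0 : Kˣ), (mk_mem_selmerGroup_empty_iff rfl).mpr ⟨I, hI⟩⟩
    exact ⟨x, (isRootClass_selmerToClassGroup hn x).unique hn ⟨_, b, I, rfl, rfl, hI, rfl⟩⟩

variable (R K) in
/-- The count of `1 → Rˣ/(Rˣ)ⁿ → K⟮∅, n⟯ → Cl(R)[n] → 1`. -/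
theorem card_selmerGroup_empty (hn : n ≠ 0) :
    Nat.card (selmerGroup (R := R) (K := K) (S := ∅) (n := n)) =
      Nat.card (PowerClass Rˣ n) *
        Nat.card (powMonoidHom n : ClassGroup R →* ClassGroup R).ker := by
  have : Fact (0 < n) := ⟨Nat.pos_of_ne_zero hn⟩
  rw [← (selmerToClassGroup R K hn).ker.card_mul_index, Subgroup.index_ker,
    range_selmerToClassGroup, ker_selmerToClassGroup]
  congr 1
  rw [← Subgroup.index_ker, selmerGroup.fromUnit_ker, Subgroup.index]

end ClassGroup

section SelmerGroup

variable {R K : Type*} [CommRing R] [IsDedekindDomain R] [Field K] [Algebra R K]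
  [IsFractionRing R K] {n : ℕ} {S : Set (HeightOneSpectrum R)}

theorem card_selmerGroup (S : Set (HeightOneSpectrum R)) :
    Nat.card (selmerGroup (R := R) (K := K) (S := S) (n := n)) =
      Nat.card (selmerGroup (R := R) (K := K) (S := ∅) (n := n)) *
        Nat.card (selmerGroup.valuation (R := R) (K := K) (S := S) (n := n)).range := by
  rw [← (selmerGroup.valuation (R := R) (K := K) (S := S) (n := n)).ker.card_mul_index,
    Subgroup.index_ker, selmerGroup.valuation_ker_eq,
    Nat.card_congr (Subgroup.subgroupOfEquivOfLe
      (selmerGroup.monotone (Set.empty_subset S))).toEquiv]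

variable [Finite (selmerGroup (R := R) (K := K) (S := ∅) (n := n))]

theorem finite_selmerGroup [NeZero n] (hS : S.Finite) :
    Finite (selmerGroup (R := R) (K := K) (S := S) (n := n)) := by
  have := hS.to_subtype
  have : Finite (Multiplicative (ZMod n)) := inferInstanceAs (Finite (ZMod n))
  refine Nat.finite_of_card_ne_zero ?_
  rw [card_selmerGroup]
  exact mul_ne_zero Nat.card_pos.ne' Nat.card_pos.ne'

omit [Finite (selmerGroup (R := R) (K := K) (S := ∅) (n := n))] in
theorem card_selmerGroup_le [NeZero n] (hS : S.Finite) :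
    Nat.card (selmerGroup (R := R) (K := K) (S := S) (n := n)) ≤
      Nat.card (selmerGroup (R := R) (K := K) (S := ∅) (n := n)) * n ^ S.ncard := by
  have := hS.to_subtype
  have : Finite (Multiplicative (ZMod n)) := inferInstanceAs (Finite (ZMod n))
  rw [card_selmerGroup]
  refine Nat.mul_le_mul_left _ ((Subgroup.card_le_card_group _).trans_eq ?_)
  rw [Nat.card_fun, Nat.card_coe_set_eq]
  exact congrArg (· ^ _) (Nat.card_zmod n)

end SelmerGroup

theorem index_range_powMonoidHom_congr {G H : Type*} [CommGroup G] [CommGroup H] (e : G ≃* H)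
    (n : ℕ) : (powMonoidHom n : G →* G).range.index = (powMonoidHom n : H →* H).range.index := by
  rw [← Subgroup.index_map_equiv _ e, MonoidHom.map_range]
  congr 1
  ext x
  constructor
  · rintro ⟨y, rfl⟩
    exact ⟨e y, by simp⟩
  · rintro ⟨y, rfl⟩
    exact ⟨e.symm y, by simp⟩

theorem index_range_powMonoidHom_multiplicative_int (n : ℕ) :
    (powMonoidHom n : Multiplicative ℤ →* Multiplicative ℤ).range.index = n := by
  have h : (powMonoidHom n : Multiplicative ℤ →* Multiplicative ℤ).range =
      AddSubgroup.toSubgroup (AddSubgroup.zmultiples (n : ℤ)) := by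
    ext x
    exact exists_congr fun y ↦ by
      rw [powMonoidHom_apply, ← Multiplicative.toAdd.injective.eq_iff, toAdd_pow, nsmul_eq_mul,
        mul_comm]
      rfl
  rw [h, AddSubgroup.index_toSubgroup, Int.index_zmultiples, Int.natAbs_natCast]

theorem index_range_powMonoidHom_pi {ι G : Type*} [Fintype ι] [CommGroup G] (n : ℕ) :
    (powMonoidHom n : (ι → G) →* ι → G).range.index =
      (powMonoidHom n : G →* G).range.index ^ Fintype.card ι := by
  rw [← Finset.card_univ, ← Finset.prod_const, ← Subgroup.index_pi]
  congr 1
  ext x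
  simp [Subgroup.mem_pi, funext_iff, Classical.skolem]

theorem index_range_powMonoidHom_prod {G H : Type*} [CommGroup G] [CommGroup H] (n : ℕ) :
    (powMonoidHom n : G × H →* G × H).range.index =
      (powMonoidHom n : G →* G).range.index * (powMonoidHom n : H →* H).range.index := by
  rw [← Subgroup.index_prod]
  congr 1
  ext x
  simp [Subgroup.mem_prod, Prod.ext_iff]

/-- Dirichlet's unit theorem as an isomorphism between the product of the roots of unity and a free
abelian group with the unit group. -/
noncomputable def torsionProdPiMulEquivUnits (K : Type*) [Field K] [NumberField K] :
    Units.torsion K × (Fin (Units.rank K) → Multiplicative ℤ) ≃* (𝓞 K)ˣ :=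
  MulEquiv.ofBijective
    (MonoidHom.mk' (fun x ↦ x.1 * ∏ i, Units.fundSystem K i ^ (x.2 i).toAdd) fun x y ↦ by
      simp [zpow_add, Finset.prod_mul_distrib, mul_mul_mul_comm])
    (Function.bijective_iff_existsUnique _ |>.mpr fun x ↦ by
      obtain ⟨y, hy, huniq⟩ := Units.exist_unique_eq_mul_prod K x
      exact ⟨y, hy.symm, fun z hz ↦ huniq z hz.symm⟩)

theorem card_powerClass_units (K : Type*) [Field K] [NumberField K] (n : ℕ) :
    Nat.card (PowerClass (𝓞 K)ˣ n) = (Nat.card (Units.torsion K)).gcd n * n ^ Units.rank K := by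
  rw [← Subgroup.index, ← index_range_powMonoidHom_congr (torsionProdPiMulEquivUnits K),
    index_range_powMonoidHom_prod, index_range_powMonoidHom_pi, IsCyclic.index_powMonoidHom_range]
  simp [index_range_powMonoidHom_multiplicative_int]

theorem card_powerClass_units_two (K : Type*) [Field K] [NumberField K] :
    Nat.card (PowerClass (𝓞 K)ˣ 2) = 2 ^ (Units.rank K + 1) := by
  have h : 2 ∣ Nat.card (Units.torsion K) := (Units.even_torsionOrder K).two_dvd
  rw [card_powerClass_units, Nat.gcd_eq_right h, pow_succ']

/-- The 2-Selmer group of a number field. -/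
abbrev selmerTwo (K : Type*) [Field K] [NumberField K] : Subgroup (PowerClass Kˣ 2) :=
  selmerGroup (R := 𝓞 K) (S := ∅)

theorem card_selmerTwo (K : Type*) [Field K] [NumberField K] :
    Nat.card (selmerTwo K) = 2 ^ (Units.rank K + 1) *
      Nat.card (powMonoidHom 2 : ClassGroup (𝓞 K) →* ClassGroup (𝓞 K)).ker := by
  rw [card_selmerGroup_empty (𝓞 K) K two_ne_zero, card_powerClass_units_two]

theorem card_selmerTwo_rat : Nat.card (selmerTwo ℚ) = 2 := by
  have hrank : Units.rank ℚ = 0 := by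
    rw [Units.rank, Fintype.card_unique]
  have : Subsingleton (ClassGroup (𝓞 ℚ)) :=
    Fintype.card_le_one_iff_subsingleton.mp Rat.classNumber_eq.le
  rw [card_selmerTwo, hrank, Nat.card_unique, zero_add, pow_one, mul_one]

instance (K : Type*) [Field K] [NumberField K] : Finite (selmerTwo K) :=
  Nat.finite_of_card_ne_zero (by rw [card_selmerTwo]; exact mul_ne_zero (by simp) Nat.card_pos.ne')

section Quadratic

variable {F L : Type*} [Field F] [Field L] [Algebra F L] [Algebra.IsQuadraticExtension F L]
  {θ : L} {r : F}

theorem exists_basis_one_sqrt (hθ : θ ^ 2 = algebraMap F L r) (hr : ¬ IsSquare r) :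
    ∃ b : Module.Basis (Fin 2) F L, b 0 = 1 ∧ b 1 = θ := by
  have hθF : ∀ x : F, algebraMap F L x ≠ θ := by
    rintro x rfl
    exact hr ⟨x, (algebraMap F L).injective (by rw [← hθ, map_mul, sq])⟩
  have hli : LinearIndependent F ![(1 : L), θ] :=
    (LinearIndependent.pair_iff' one_ne_zero).mpr fun x ↦ by
      rw [← Algebra.algebraMap_eq_smul_one]
      exact hθF x
  have hcard : Fintype.card (Fin 2) = Module.finrank F L := by
    rw [Algebra.IsQuadraticExtension.finrank_eq_two F L, Fintype.card_fin]
  exact ⟨basisOfLinearIndependentOfCardEqFinrank hli hcard, by simp, by simp⟩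

theorem exists_eq_add_mul_sqrt (hθ : θ ^ 2 = algebraMap F L r) (hr : ¬ IsSquare r) (α : L) :
    ∃ x y : F, α = algebraMap F L x + algebraMap F L y * θ := by
  obtain ⟨b, hb0, hb1⟩ := exists_basis_one_sqrt hθ hr
  refine ⟨b.repr α 0, b.repr α 1, ?_⟩
  conv_lhs => rw [← b.sum_repr α, Fin.sum_univ_two, hb0, hb1]
  simp [Algebra.smul_def]

theorem leftMulMatrix_add_mul_sqrt (hθ : θ ^ 2 = algebraMap F L r) (hr : ¬ IsSquare r) :
    ∃ b : Module.Basis (Fin 2) F L, ∀ x y : F,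
    Algebra.leftMulMatrix b (algebraMap F L x + algebraMap F L y * θ) = !![x, r * y; y, x] := by
  obtain ⟨b, hb0, hb1⟩ := exists_basis_one_sqrt hθ hr
  refine ⟨b, fun x y ↦ ?_⟩
  have h0 : (algebraMap F L x + algebraMap F L y * θ) * b 0 = x • b 0 + y • b 1 := by
    rw [hb0, hb1]
    simp [Algebra.smul_def]
  have h1 : (algebraMap F L x + algebraMap F L y * θ) * b 1 = (r * y) • b 0 + x • b 1 := by
    rw [hb0, hb1]
    simp only [Algebra.smul_def, map_mul, ← hθ]
    ring
  ext i j
  rw [Algebra.leftMulMatrix_eq_repr_mul]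
  fin_cases i <;> fin_cases j <;> simp [h0, h1]

theorem norm_add_mul_sqrt (hθ : θ ^ 2 = algebraMap F L r) (hr : ¬ IsSquare r) (x y : F) :
    Algebra.norm F (algebraMap F L x + algebraMap F L y * θ) = x ^ 2 - r * y ^ 2 := by
  obtain ⟨b, hb⟩ := leftMulMatrix_add_mul_sqrt hθ hr
  rw [Algebra.norm_eq_matrix_det b, hb, Matrix.det_fin_two_of]
  ring

theorem trace_add_mul_sqrt (hθ : θ ^ 2 = algebraMap F L r) (hr : ¬ IsSquare r) (x y : F) :
    Algebra.trace F L (algebraMap F L x + algebraMap F L y * θ) = 2 * x := by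
  obtain ⟨b, hb⟩ := leftMulMatrix_add_mul_sqrt hθ hr
  rw [Algebra.trace_eq_matrix_trace b, hb, Matrix.trace_fin_two_of, two_mul]

/-- From `α² - 2xα + b² = 0` one gets `(α + b)² = 2(x + b)α`. -/
theorem exists_eq_mul_sq_of_norm_eq_sq (hθ : θ ^ 2 = algebraMap F L r) (hr : ¬ IsSquare r) {α : L}
    {b : F} (hb : Algebra.norm F α = b ^ 2) :
    ∃ (a : F) (β : L), α = algebraMap F L a * β ^ 2 := by
  obtain ⟨x, y, rfl⟩ := exists_eq_add_mul_sqrt hθ hr α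
  set α := algebraMap F L x + algebraMap F L y * θ with hαdef
  have hsq : (α + algebraMap F L b) ^ 2 = algebraMap F L (2 * (x + b)) * α := by
    have hnorm := congrArg (algebraMap F L) ((norm_add_mul_sqrt hθ hr x y).symm.trans hb)
    simp only [map_sub, map_mul, map_pow, map_add, map_ofNat] at hnorm ⊢
    rw [hαdef]
    linear_combination -hnorm + algebraMap F L y ^ 2 * hθ
  obtain h0 | h0 := eq_or_ne (α + algebraMap F L b) 0
  · exact ⟨-b, 1, by rw [map_neg, one_pow, mul_one]; exact eq_neg_of_add_eq_zero_left h0⟩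
  · refine ⟨2 * (x + b), (α + algebraMap F L b) / algebraMap F L (2 * (x + b)), ?_⟩
    have hne : algebraMap F L (2 * (x + b)) ≠ 0 := by
      intro h
      rw [h, zero_mul] at hsq
      exact h0 (pow_eq_zero_iff two_ne_zero |>.mp hsq)
    rw [div_pow, hsq]
    field_simp

theorem subalgebra_eq_top_of_sqrt_mem (hθ : θ ^ 2 = algebraMap F L r) (hr : ¬ IsSquare r)
    {S : Subalgebra F L} (hS : θ ∈ S) : S = ⊤ := by
  refine eq_top_iff.mpr fun α _ ↦ ?_
  obtain ⟨x, y, rfl⟩ := exists_eq_add_mul_sqrt hθ hr α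
  exact add_mem (S.algebraMap_mem x) (mul_mem (S.algebraMap_mem y) hS)

omit [Algebra.IsQuadraticExtension F L] in
theorem minpoly_eq_X_sq_sub_C (hθ : θ ^ 2 = algebraMap F L r) (hr : ¬ IsSquare r) :
    minpoly F θ = X ^ 2 - C r := by
  have hirr : Irreducible (X ^ 2 - C r) :=
    (X_pow_sub_C_irreducible_iff_of_prime Nat.prime_two).mpr fun b hb ↦ hr ⟨b, by rw [← hb, sq]⟩
  exact (minpoly.eq_of_irreducible_of_monic hirr (by simp [hθ])
    (monic_X_pow_sub_C r two_ne_zero)).symm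

omit [Algebra.IsQuadraticExtension F L] in
theorem isQuadraticExtension_adjoin_sqrt (hθ : θ ^ 2 = algebraMap F L r) (hr : ¬ IsSquare r) :
    Algebra.IsQuadraticExtension F F⟮θ⟯ where
  finrank_eq_two' := by
    have hint : IsIntegral F θ := .of_pow two_pos (hθ ▸ isIntegral_algebraMap)
    rw [IntermediateField.adjoin.finrank hint, minpoly_eq_X_sq_sub_C hθ hr, natDegree_X_pow_sub_C]

theorem exists_algHom_sqrt {A : Type*} [CommRing A] [Algebra F A]
    (hθ : θ ^ 2 = algebraMap F L r) (hr : ¬ IsSquare r) {a : A} (ha : a ^ 2 = algebraMap F A r) :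
    ∃ f : L →ₐ[F] A, f θ = a := by
  have htop : Algebra.adjoin F {θ} = ⊤ :=
    subalgebra_eq_top_of_sqrt_mem hθ hr (Algebra.self_mem_adjoin_singleton F θ)
  let B := PowerBasis.ofAdjoinEqTop (Algebra.IsIntegral.isIntegral θ) htop
  have hB : B.gen = θ := PowerBasis.ofAdjoinEqTop_gen _ _
  have hroot : aeval a (minpoly F B.gen) = 0 := by
    rw [hB, minpoly_eq_X_sq_sub_C hθ hr]
    simp [ha]
  exact ⟨B.lift a hroot, (congrArg _ hB.symm).trans (B.lift_gen a hroot)⟩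

end Quadratic

/-- The homomorphism on `n`-th power classes induced by `f`. -/
def PowerClass.map {G H : Type*} [CommGroup G] [CommGroup H] (f : G →* H) (n : ℕ) :
    PowerClass G n →* PowerClass H n :=
  QuotientGroup.map _ _ f (by
    rintro _ ⟨x, rfl⟩
    exact ⟨f x, by simp⟩)

@[simp]
theorem PowerClass.map_mk {G H : Type*} [CommGroup G] [CommGroup H] (f : G →* H) (n : ℕ) (x : G) :
    PowerClass.map f n (x : PowerClass G n) = (f x : PowerClass H n) := rfl

theorem PowerClass.mk_eq_one_iff {G : Type*} [CommGroup G] {n : ℕ} {x : G} :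
    (x : PowerClass G n) = 1 ↔ ∃ y, y ^ n = x := by
  rw [QuotientGroup.eq_one_iff]
  rfl

section Extension

variable {A K B L : Type*} [CommRing A] [IsDedekindDomain A] [Field K] [Algebra A K]
  [IsFractionRing A K] [CommRing B] [IsDedekindDomain B] [Field L] [Algebra B L]
  [IsFractionRing B L] [Algebra A B] [Module.Finite A B] [Module.IsTorsionFree A B] [Algebra K L]
  [FiniteDimensional K L] [Algebra A L] [IsScalarTower A K L] [IsScalarTower A B L] {n : ℕ}

theorem map_norm_mem_selmerGroup (hn : n ≠ 0) {x : PowerClass Lˣ n}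
    (hx : x ∈ selmerGroup (R := B) (K := L) (S := ∅) (n := n)) :
    PowerClass.map (Units.map (Algebra.norm K)) n x ∈
      selmerGroup (R := A) (K := K) (S := ∅) (n := n) := by
  have := IsIntegralClosure.of_isIntegrallyClosed B A L
  obtain ⟨b, y, hy, rfl⟩ := PowerClass.exists_integral_rep (R := B) hn x
  obtain ⟨I, hI⟩ := (mk_mem_selmerGroup_empty_iff hy).mp hx
  have hnorm : (Units.map (Algebra.norm K) y : K) = algebraMap A K (Algebra.intNorm A B b) := by
    rw [Algebra.algebraMap_intNorm (L := L), ← hy]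
    rfl
  refine (mk_mem_selmerGroup_empty_iff hnorm).mpr ⟨Ideal.relNorm A I, ?_⟩
  rw [← map_pow, ← hI, Ideal.relNorm_singleton]

omit [Module.Finite A B] [FiniteDimensional K L] in
theorem valuationOfNeZeroMod_map_algebraMap (v : HeightOneSpectrum A) (w : HeightOneSpectrum B)
    [w.asIdeal.LiesOver v.asIdeal] (he : v.asIdeal.ramificationIdx' w.asIdeal = 1)
    (x : PowerClass Kˣ n) :
    w.valuationOfNeZeroMod n (PowerClass.map (Units.map (algebraMap K L : K →* L)) n x) =
      v.valuationOfNeZeroMod n x := by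
  obtain ⟨x, rfl⟩ := QuotientGroup.mk_surjective x
  have h : w.valuationOfNeZero (Units.map (algebraMap K L : K →* L) x) = v.valuationOfNeZero x := by
    have := v.valuation_liesOver L w (x : K)
    rw [he, pow_one] at this
    rw [← WithZero.coe_inj, w.valuationOfNeZero_eq, v.valuationOfNeZero_eq, this]
    rfl
  change w.valuationOfNeZeroMod n ((Units.map (algebraMap K L : K →* L) x : Lˣ) : PowerClass Lˣ n) =
    v.valuationOfNeZeroMod n (x : PowerClass Kˣ n)
  rw [valuationOfNeZeroMod_mk, valuationOfNeZeroMod_mk, h]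

attribute [local instance] FractionRing.liftAlgebra in
variable (K L) in
theorem isUnramifiedAt_of_aeval_derivative_notMem [Algebra.IsSeparable K L]
    {f : A[X]} {z : B} (hf : aeval z f = 0) (hz : Algebra.adjoin K {algebraMap B L z} = ⊤)
    {P : Ideal B} [P.IsPrime] (hP : aeval z (derivative f) ∉ P) : Algebra.IsUnramifiedAt A P := by
  have := IsIntegralClosure.of_isIntegrallyClosed B A L
  have : Algebra.IsSeparable (FractionRing A) (FractionRing B) :=
    Algebra.IsSeparable.of_equiv_equiv (FractionRing.algEquiv A K).symm.toRingEquiv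
      (FractionRing.algEquiv B L).symm.toRingEquiv <| by
        ext x
        exact IsFractionRing.algEquiv_commutes (FractionRing.algEquiv A K).symm
          (FractionRing.algEquiv B L).symm _
  obtain ⟨g, hg⟩ := minpoly.isIntegrallyClosed_dvd (Algebra.IsIntegral.isIntegral z) hf
  rw [← not_dvd_differentIdeal_iff, Ideal.dvd_iff_le]
  intro hle
  refine hP ?_
  rw [hg, derivative_mul, map_add, map_mul, map_mul, minpoly.aeval, zero_mul, add_zero]
  exact P.mul_mem_right _ (hle (aeval_derivative_mem_differentIdeal A K L z hz))

omit [FiniteDimensional K L] in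
theorem valuationOfNeZeroMod_eq_one_of_isUnramifiedAt (v : HeightOneSpectrum A)
    (hv : ∀ (P : Ideal B) [P.IsPrime] [P.LiesOver v.asIdeal], Algebra.IsUnramifiedAt A P)
    {x : PowerClass Kˣ n} (hx : PowerClass.map (Units.map (algebraMap K L : K →* L)) n x ∈
      selmerGroup (R := B) (K := L) (S := ∅) (n := n)) :
    v.valuationOfNeZeroMod n x = 1 := by
  obtain ⟨P, hP, hPv⟩ := v.asIdeal.nonempty_primesOver (S := B)
  let w : HeightOneSpectrum B := ⟨P, hP, Ideal.ne_bot_of_liesOver_of_ne_bot v.ne_bot P⟩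
  have : w.asIdeal.LiesOver v.asIdeal := hPv
  have : Algebra.IsUnramifiedAt A w.asIdeal := hv P
  have he : v.asIdeal.ramificationIdx' w.asIdeal = 1 := by
    rw [Ideal.ramificationIdx'_eq_ramificationIdx _ _ v.ne_bot,
      Ideal.ramificationIdx_eq_one_of_isUnramifiedAt]
  rw [← valuationOfNeZeroMod_map_algebraMap (L := L) v w he]
  exact hx w (Set.notMem_empty w)

end Extension

section RingOfIntegersQuadratic

variable {F L : Type*} [Field F] [NumberField F] [Field L] [NumberField L] [Algebra F L]
  [Algebra.IsQuadraticExtension F L] {θ : L} {r : 𝓞 F}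

omit [NumberField F] [Algebra.IsQuadraticExtension F L] in
theorem exists_root_quadratic_of_eq_four_mul (hθ : θ ^ 2 = algebraMap F L r) {s c n : 𝓞 F}
    (hn : s ^ 2 - c ^ 2 * r = 4 * n) :
    ∃ z : 𝓞 L, aeval z (X ^ 2 - C s * X + C n) = 0 ∧
      2 * algebraMap (𝓞 L) L z - algebraMap F L s = algebraMap F L c * θ := by
  have hnL := congrArg (algebraMap (𝓞 F) L) hn
  simp only [IsScalarTower.algebraMap_apply (𝓞 F) F L, map_sub, map_mul, map_pow, map_ofNat] at hnL
  have hroot : aeval ((algebraMap F L s + algebraMap F L c * θ) / 2)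
      (X ^ 2 - C s * X + C n : (𝓞 F)[X]) = 0 := by
    simp only [map_add, map_sub, map_mul, map_pow, aeval_X, aeval_C,
      IsScalarTower.algebraMap_apply (𝓞 F) F L]
    linear_combination (algebraMap F L c) ^ 2 / 4 * hθ - hnL / 4
  have hint : IsIntegral (𝓞 F) ((algebraMap F L s + algebraMap F L c * θ) / 2) :=
    ⟨X ^ 2 - C s * X + C n, by monicity!, hroot⟩
  obtain ⟨z, hz⟩ := (IsIntegralClosure.isIntegral_iff (A := 𝓞 L)).mp hint
  refine ⟨z, ?_, by rw [hz]; ring⟩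
  apply FaithfulSMul.algebraMap_injective (𝓞 L) L
  rw [map_zero, ← aeval_algebraMap_apply, hz, hroot]

theorem isUnramifiedAt_of_four_dvd (hθ : θ ^ 2 = algebraMap F L r) (hr : ¬ IsSquare (r : F))
    {s c : 𝓞 F} (h : 4 ∣ s ^ 2 - c ^ 2 * r) {P : Ideal (𝓞 L)} [P.IsPrime]
    (hP : algebraMap (𝓞 F) (𝓞 L) (c ^ 2 * r) ∉ P) : Algebra.IsUnramifiedAt (𝓞 F) P := by
  obtain ⟨n, hn⟩ := h
  obtain ⟨z, hz, hzθ⟩ := exists_root_quadratic_of_eq_four_mul hθ hn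
  have hc : algebraMap F L c ≠ 0 := by
    intro hc
    have : c = 0 := by simpa using hc
    simp [this] at hP
  have htop : Algebra.adjoin F {algebraMap (𝓞 L) L z} = ⊤ := by
    refine subalgebra_eq_top_of_sqrt_mem hθ hr ?_
    have hθz : θ = algebraMap F L ((c : F)⁻¹) * (2 * algebraMap (𝓞 L) L z - algebraMap F L s) := by
      rw [hzθ, map_inv₀, inv_mul_cancel_left₀ hc]
    rw [hθz]
    exact mul_mem (Subalgebra.algebraMap_mem _ _) (sub_mem
      (mul_mem (ofNat_mem _ 2) (Algebra.self_mem_adjoin_singleton F _))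
      (Subalgebra.algebraMap_mem _ _))
  refine isUnramifiedAt_of_aeval_derivative_notMem F L hz htop fun hmem ↦ hP ?_
  have hz' : z ^ 2 - algebraMap (𝓞 F) (𝓞 L) s * z + algebraMap (𝓞 F) (𝓞 L) n = 0 := by
    simpa using hz
  have hnL := congrArg (algebraMap (𝓞 F) (𝓞 L)) hn
  have hsq : algebraMap (𝓞 F) (𝓞 L) (c ^ 2 * r) = (2 * z - algebraMap (𝓞 F) (𝓞 L) s) ^ 2 := by
    simp only [map_sub, map_mul, map_pow, map_ofNat] at hnL ⊢
    linear_combination -hnL - 4 * hz'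
  rw [hsq]
  refine Ideal.pow_mem_of_mem _ ?_ 2 two_pos
  simpa [one_add_one_eq_two, map_ofNat (algebraMap (𝓞 F) (𝓞 L)) 2] using hmem

end RingOfIntegersQuadratic

section PrimeElement

variable {R K : Type*} [CommRing R] [IsDedekindDomain R] [Field K] [Algebra R K]
  [IsFractionRing R K] {r : R}

theorem asIdeal_eq_span_singleton_of_prime (hr : Prime r) {v : HeightOneSpectrum R}
    (hv : r ∈ v.asIdeal) : v.asIdeal = Ideal.span {r} := by
  have hprime : (Ideal.span {r}).IsPrime := (Ideal.span_singleton_prime hr.ne_zero).mpr hr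
  have hmax := hprime.isMaximal (by simpa using hr.ne_zero)
  exact (hmax.eq_of_le v.isPrime.ne_top ((Ideal.span_singleton_le_iff_mem _).mpr hv)).symm

theorem subsingleton_setOf_mem_asIdeal (hr : Prime r) :
    {v : HeightOneSpectrum R | r ∈ v.asIdeal}.Subsingleton :=
  fun _ hv _ hw ↦ HeightOneSpectrum.ext <|
    (asIdeal_eq_span_singleton_of_prime hr hv).trans (asIdeal_eq_span_singleton_of_prime hr hw).symm

theorem valuationOfNeZero_of_prime (hr : Prime r) {v : HeightOneSpectrum R} (hv : r ∈ v.asIdeal)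
    {x : Kˣ} (hx : (x : K) = algebraMap R K r) :
    v.valuationOfNeZero x = Multiplicative.ofAdd (-1) := by
  rw [← WithZero.coe_inj, v.valuationOfNeZero_eq, hx, v.valuation_of_algebraMap,
    v.intValuation_singleton hr.ne_zero (asIdeal_eq_span_singleton_of_prime hr hv)]
  rfl

theorem not_isSquare_algebraMap_of_prime (hr : Prime r) : ¬ IsSquare (algebraMap R K r) := by
  rintro ⟨x, hx⟩
  have hint : IsIntegral R x :=
    IsIntegral.of_pow two_pos (by rw [sq, ← hx]; exact isIntegral_algebraMap)
  obtain ⟨y, rfl⟩ := IsIntegrallyClosed.isIntegral_iff.mp hint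
  exact hr.irreducible.not_isSquare ⟨y, IsFractionRing.injective R K (by rw [hx, map_mul])⟩

end PrimeElement

theorem card_eq_card_inf_ker_mul_card_map {G H : Type*} [Group G] [Group H] (f : G →* H)
    (S : Subgroup G) : Nat.card S = Nat.card (S ⊓ f.ker : Subgroup G) * Nat.card (S.map f) := by
  rw [← Subgroup.relIndex_ker, ← Subgroup.inf_relIndex_left S f.ker,
    ← Subgroup.relIndex_bot_left S, ← Subgroup.relIndex_bot_left (S ⊓ f.ker),
    Subgroup.relIndex_mul_relIndex _ _ _ bot_le inf_le_left]

theorem two_mul_card_le_card_of_lt {G : Type*} [Group G] {S T : Subgroup G} [Finite T]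
    (h : S < T) : 2 * Nat.card S ≤ Nat.card T := by
  obtain ⟨m, hm⟩ := Subgroup.card_dvd_of_le h.le
  have hm1 : m ≠ 1 := by
    rintro rfl
    exact h.ne (Subgroup.eq_of_le_of_card_ge h.le (by rw [hm, mul_one]))
  have hm0 : m ≠ 0 := by
    rintro rfl
    exact Nat.card_pos.ne' hm
  rw [hm, mul_comm]
  exact Nat.mul_le_mul_left _ (by omega)

section QuadraticLayer

variable {F L : Type*} [Field F] [Field L] [Algebra F L] {θ : L}

theorem map_algebraMap_sqrt_eq_one {r : Fˣ} (hθ : θ ^ 2 = algebraMap F L r) :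
    PowerClass.map (Units.map (algebraMap F L : F →* L)) 2 (r : PowerClass Fˣ 2) = 1 := by
  have hθ0 : θ ≠ 0 := by
    rintro rfl
    simp [eq_comm (a := (0 : L))] at hθ
  exact PowerClass.mk_eq_one_iff.mpr ⟨Units.mk0 θ hθ0, Units.ext hθ⟩

theorem exists_map_algebraMap_eq_of_map_norm_eq_one [Algebra.IsQuadraticExtension F L] {r : F}
    (hθ : θ ^ 2 = algebraMap F L r) (hr : ¬ IsSquare r) {x : PowerClass Lˣ 2}
    (hx : PowerClass.map (Units.map (Algebra.norm F)) 2 x = 1) :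
    ∃ a, PowerClass.map (Units.map (algebraMap F L : F →* L)) 2 a = x := by
  obtain ⟨α, rfl⟩ := QuotientGroup.mk_surjective x
  obtain ⟨b, hb⟩ := PowerClass.mk_eq_one_iff.mp hx
  obtain ⟨a, β, hα⟩ := exists_eq_mul_sq_of_norm_eq_sq (b := (b : F)) hθ hr
    (congrArg Units.val hb).symm
  have hne : algebraMap F L a * β ^ 2 ≠ 0 := hα ▸ α.ne_zero
  have ha : a ≠ 0 := by
    rintro rfl
    simp at hne
  have hβ : β ≠ 0 := by
    rintro rfl
    simp at hne
  refine ⟨(Units.mk0 a ha : Fˣ), ?_⟩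
  rw [PowerClass.map_mk, QuotientGroup.eq]
  refine ⟨Units.mk0 β hβ, ?_⟩
  rw [eq_inv_mul_iff_mul_eq]
  exact Units.ext hα.symm

theorem exists_norm_eq_neg_one_of_map_norm_eq {x : PowerClass Lˣ 2}
    (hx : PowerClass.map (Units.map (Algebra.norm F)) 2 x = ((-1 : Fˣ) : PowerClass Fˣ 2))
    (hFL : Module.finrank F L = 2) :
    ∃ α : L, Algebra.norm F α = -1 := by
  obtain ⟨α, rfl⟩ := QuotientGroup.mk_surjective x
  obtain ⟨b, hb⟩ := QuotientGroup.eq.mp hx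
  have hb' : (b : F) ^ 2 = -(Algebra.norm F (α : L))⁻¹ := by
    have := congrArg Units.val hb
    simpa using this
  refine ⟨α * algebraMap F L b, ?_⟩
  rw [map_mul, Algebra.norm_algebraMap, hFL, hb']
  have : Algebra.norm F (α : L) ≠ 0 := (Units.map (Algebra.norm F) α).ne_zero
  field_simp

end QuadraticLayer

theorem exists_map_algebraMap_eq_forall_valuationOfNeZeroMod_eq_one {R F L : Type*} [CommRing R]
    [IsDedekindDomain R] [Field F] [Algebra R F] [IsFractionRing R F] [Field L] [Algebra F L]
    {θ : L} {r : R} (hθ : θ ^ 2 = algebraMap F L (algebraMap R F r)) (hr : Prime r)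
    (a : PowerClass Fˣ 2) :
    ∃ b, PowerClass.map (Units.map (algebraMap F L : F →* L)) 2 b =
        PowerClass.map (Units.map (algebraMap F L : F →* L)) 2 a ∧
      ∀ v : HeightOneSpectrum R, r ∈ v.asIdeal → v.valuationOfNeZeroMod 2 b = 1 := by
  by_cases hav : ∀ v : HeightOneSpectrum R, r ∈ v.asIdeal → v.valuationOfNeZeroMod 2 a = 1
  · exact ⟨a, rfl, hav⟩
  push Not at hav
  obtain ⟨v, hrv, hva⟩ := hav
  let r' : Fˣ := Units.mk0 (algebraMap R F r) (by simpa using hr.ne_zero)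
  have hr' : v.valuationOfNeZeroMod 2 (r' : PowerClass Fˣ 2) ≠ 1 := by
    rw [valuationOfNeZeroMod_mk, valuationOfNeZero_of_prime hr hrv rfl]
    decide
  refine ⟨a * r', ?_, fun w hrw ↦ ?_⟩
  · rw [map_mul, map_algebraMap_sqrt_eq_one (r := r') hθ, mul_one]
  obtain rfl : w = v := subsingleton_setOf_mem_asIdeal hr hrw hrv
  have hmul : ∀ x y : Multiplicative (ZMod 2), x ≠ 1 → y ≠ 1 → x * y = 1 := by decide
  rw [map_mul]
  exact hmul _ _ hva hr'

/-- A sufficient condition for `F(√r)` to be unramified at the prime `v` not containing `r`: up to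
squares prime to `v`, the element `r` is a square modulo `4`. -/
def IsSquareModFourAt {R : Type*} [CommRing R] [IsDedekindDomain R] (r : R)
    (v : HeightOneSpectrum R) : Prop :=
  ∃ s c : R, c ∉ v.asIdeal ∧ 4 ∣ s ^ 2 - c ^ 2 * r

theorem IsSquareModFourAt.of_two_notMem {R : Type*} [CommRing R] [IsDedekindDomain R] (r : R)
    {v : HeightOneSpectrum R} (hv : 2 ∉ v.asIdeal) : IsSquareModFourAt r v :=
  ⟨0, 2, hv, -r, by ring⟩

section Layer

variable {F L : Type*} [Field F] [NumberField F] [Field L] [NumberField L] [Algebra F L]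
  [Algebra.IsQuadraticExtension F L] {θ : L} {r : 𝓞 F}

theorem valuationOfNeZeroMod_eq_one_of_isSquareModFourAt (hθ : θ ^ 2 = algebraMap F L r)
    (hr : ¬ IsSquare (r : F)) {v : HeightOneSpectrum (𝓞 F)} (hv : r ∉ v.asIdeal)
    (h : IsSquareModFourAt r v) {a : PowerClass Fˣ 2}
    (ha : PowerClass.map (Units.map (algebraMap F L : F →* L)) 2 a ∈ selmerTwo L) :
    v.valuationOfNeZeroMod 2 a = 1 := by
  refine valuationOfNeZeroMod_eq_one_of_isUnramifiedAt v (fun P _ _ ↦ ?_) ha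
  obtain ⟨s, c, hc, h⟩ := h
  refine isUnramifiedAt_of_four_dvd hθ hr h ?_
  rw [← Ideal.mem_of_liesOver P v.asIdeal]
  exact v.isPrime.mul_notMem (fun hc' ↦ hc (v.isPrime.mem_of_pow_mem 2 hc')) hv

theorem exists_mem_selmerGroup_map_algebraMap_eq (hθ : θ ^ 2 = algebraMap F L r) (hr : Prime r)
    {T : Set (HeightOneSpectrum (𝓞 F))}
    (hT : ∀ v ∉ T, r ∉ v.asIdeal → 2 ∈ v.asIdeal → IsSquareModFourAt r v)
    {a : PowerClass Fˣ 2}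
    (ha : PowerClass.map (Units.map (algebraMap F L : F →* L)) 2 a ∈ selmerTwo L) :
    ∃ b ∈ selmerGroup (R := 𝓞 F) (K := F) (S := T) (n := 2),
      PowerClass.map (Units.map (algebraMap F L : F →* L)) 2 b =
        PowerClass.map (Units.map (algebraMap F L : F →* L)) 2 a := by
  obtain ⟨b, hb, hbr⟩ := exists_map_algebraMap_eq_forall_valuationOfNeZeroMod_eq_one hθ hr a
  refine ⟨b, fun v hv ↦ ?_, hb⟩
  by_cases hrv : r ∈ v.asIdeal
  · exact hbr v hrv
  · refine valuationOfNeZeroMod_eq_one_of_isSquareModFourAt hθ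
      (not_isSquare_algebraMap_of_prime hr) hrv ?_ (hb ▸ ha)
    by_cases h2 : 2 ∈ v.asIdeal
    · exact hT v hv hrv h2
    · exact .of_two_notMem r h2

theorem neg_one_mem_selmerTwo : ((-1 : Fˣ) : PowerClass Fˣ 2) ∈ selmerTwo F :=
  (mk_mem_selmerGroup_empty_iff (b := (-1 : 𝓞 F)) (by simp)).mpr
    ⟨⊤, by rw [Ideal.span_singleton_eq_top.mpr isUnit_neg_one, ← Ideal.one_eq_top, one_pow]⟩

omit [Algebra.IsQuadraticExtension F L] in
theorem map_norm_selmerTwo_le :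
    (selmerTwo L).map (PowerClass.map (Units.map (Algebra.norm F)) 2) ≤ selmerTwo F := by
  rintro _ ⟨x, hx, rfl⟩
  exact map_norm_mem_selmerGroup two_ne_zero hx

theorem map_norm_selmerTwo_lt (h : ∀ α : L, Algebra.norm F α ≠ -1) :
    (selmerTwo L).map (PowerClass.map (Units.map (Algebra.norm F)) 2) < selmerTwo F := by
  refine lt_of_le_of_ne map_norm_selmerTwo_le fun heq ↦ ?_
  obtain ⟨x, -, hx⟩ := heq.ge neg_one_mem_selmerTwo
  obtain ⟨α, hα⟩ := exists_norm_eq_neg_one_of_map_norm_eq hx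
    (Algebra.IsQuadraticExtension.finrank_eq_two F L)
  exact h α hα

theorem card_selmerTwo_inf_ker_norm_le (hθ : θ ^ 2 = algebraMap F L r) (hr : Prime r)
    {T : Set (HeightOneSpectrum (𝓞 F))} (hfin : T.Finite)
    (hT : ∀ v ∉ T, r ∉ v.asIdeal → 2 ∈ v.asIdeal → IsSquareModFourAt r v) :
    Nat.card (selmerTwo L ⊓ (PowerClass.map (Units.map (Algebra.norm F (S := L))) 2).ker :
      Subgroup (PowerClass Lˣ 2)) ≤ Nat.card (selmerTwo F) * 2 ^ T.ncard := by
  have := finite_selmerGroup (R := 𝓞 F) (K := F) (n := 2) hfin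
  have hle : selmerTwo L ⊓ (PowerClass.map (Units.map (Algebra.norm F (S := L))) 2).ker ≤
      (selmerGroup (R := 𝓞 F) (K := F) (S := T) (n := 2)).map
        (PowerClass.map (Units.map (algebraMap F L : F →* L)) 2) := by
    rintro x ⟨hx, hNx⟩
    obtain ⟨a, rfl⟩ := exists_map_algebraMap_eq_of_map_norm_eq_one hθ
      (not_isSquare_algebraMap_of_prime hr) hNx
    exact exists_mem_selmerGroup_map_algebraMap_eq hθ hr hT hx
  have hsurj := (PowerClass.map (Units.map (algebraMap F L : F →* L)) 2).subgroupMap_surjective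
    (selmerGroup (R := 𝓞 F) (K := F) (S := T) (n := 2))
  have := Finite.of_surjective _ hsurj
  exact (Subgroup.card_le_of_le hle).trans <|
    (Nat.card_le_card_of_surjective _ hsurj).trans (card_selmerGroup_le hfin)

theorem card_selmerTwo_le_sq (hθ : θ ^ 2 = algebraMap F L r) (hr : Prime r)
    {T : Set (HeightOneSpectrum (𝓞 F))}
    (hT : ∀ v ∉ T, r ∉ v.asIdeal → 2 ∈ v.asIdeal → IsSquareModFourAt r v)
    (hT' : T = ∅ ∨ T.Subsingleton ∧ ∀ α : L, Algebra.norm F α ≠ -1) :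
    Nat.card (selmerTwo L) ≤ Nat.card (selmerTwo F) ^ 2 := by
  rw [card_eq_card_inf_ker_mul_card_map (PowerClass.map (Units.map (Algebra.norm F)) 2), sq]
  rcases hT' with rfl | ⟨hsub, hnorm⟩
  · have hker := card_selmerTwo_inf_ker_norm_le hθ hr Set.finite_empty hT
    rw [Set.ncard_empty, pow_zero, mul_one] at hker
    exact Nat.mul_le_mul hker (Subgroup.card_le_of_le map_norm_selmerTwo_le)
  · have := hsub.finite.to_subtype
    have hT1 : 2 ^ T.ncard ≤ 2 :=
      Nat.pow_le_pow_right two_pos (Set.ncard_le_one_iff_subsingleton.mpr hsub)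
    have hker := card_selmerTwo_inf_ker_norm_le hθ hr hsub.finite hT
    have himage := two_mul_card_le_card_of_lt (map_norm_selmerTwo_lt hnorm)
    calc _ ≤ (Nat.card (selmerTwo F) * 2) * _ :=
          Nat.mul_le_mul_right _ (hker.trans (Nat.mul_le_mul_left _ hT1))
      _ = Nat.card (selmerTwo F) * (2 * _) := mul_assoc _ _ _
      _ ≤ _ := Nat.mul_le_mul_left _ himage

end Layer

section PrimesAbove

variable {F : Type*} [Field F] [NumberField F] [Algebra.IsQuadraticExtension ℚ F] {q : ℕ}
  {v w : HeightOneSpectrum (𝓞 F)}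

theorem span_natCast_eq_inf_of_ne (hq : q.Prime) (hvw : v ≠ w) (hv : (q : 𝓞 F) ∈ v.asIdeal)
    (hw : (q : 𝓞 F) ∈ w.asIdeal) :
    Ideal.span {(q : 𝓞 F)} = v.asIdeal ⊓ w.asIdeal ∧ Ideal.absNorm v.asIdeal = q := by
  have hco : v.asIdeal ⊔ w.asIdeal = ⊤ :=
    Ideal.IsMaximal.coprime_of_ne v.isMaximal w.isMaximal fun h ↦ hvw (HeightOneSpectrum.ext h)
  obtain ⟨J, hJ⟩ : v.asIdeal * w.asIdeal ∣ Ideal.span {(q : 𝓞 F)} := by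
    rw [Ideal.dvd_span_singleton, Ideal.mul_eq_inf_of_coprime hco]
    exact ⟨hv, hw⟩
  have hnorm : Ideal.absNorm v.asIdeal * (Ideal.absNorm w.asIdeal * Ideal.absNorm J) = q ^ 2 := by
    rw [← mul_assoc, ← map_mul, ← map_mul, ← hJ, Ideal.absNorm_span_natCast,
      RingOfIntegers.rank, Algebra.IsQuadraticExtension.finrank_eq_two]
  have hne (u : HeightOneSpectrum (𝓞 F)) : Ideal.absNorm u.asIdeal ≠ 1 :=
    fun h ↦ u.isPrime.ne_top (Ideal.absNorm_eq_one_iff.mp h)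
  obtain ⟨hnv, hnwJ⟩ := (hq.mul_eq_prime_sq_iff (hne v)
    fun h ↦ hne w (Nat.eq_one_of_mul_eq_one_right h)).mp hnorm
  have hnJ := (Nat.dvd_prime hq).mp ⟨_, hnwJ.symm⟩ |>.resolve_left (hne w)
  have : Ideal.absNorm J = 1 := by
    rw [hnJ] at hnwJ
    exact (Nat.mul_eq_left hq.ne_zero).mp hnwJ
  rw [Ideal.absNorm_eq_one_iff.mp this, Ideal.mul_top, Ideal.mul_eq_inf_of_coprime hco] at hJ
  exact ⟨hJ, hnv⟩

theorem natCast_dvd_of_mem_of_mem (hq : q.Prime) (hvw : v ≠ w) (hv : (q : 𝓞 F) ∈ v.asIdeal)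
    (hw : (q : 𝓞 F) ∈ w.asIdeal) {x : 𝓞 F} (hxv : x ∈ v.asIdeal) (hxw : x ∈ w.asIdeal) :
    (q : 𝓞 F) ∣ x := by
  rw [← Ideal.mem_span_singleton, (span_natCast_eq_inf_of_ne hq hvw hv hw).1]
  exact ⟨hxv, hxw⟩

theorem natCast_dvd_pow_sub_self_of_ne (hq : q.Prime) (hvw : v ≠ w) (hv : (q : 𝓞 F) ∈ v.asIdeal)
    (hw : (q : 𝓞 F) ∈ w.asIdeal) (x : 𝓞 F) : (q : 𝓞 F) ∣ x ^ q - x := by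
  have hmem (u : HeightOneSpectrum (𝓞 F)) (hu : Ideal.absNorm u.asIdeal = q) :
      x ^ q - x ∈ u.asIdeal := by
    let := Ideal.Quotient.field u.asIdeal
    have := Fintype.ofFinite (𝓞 F ⧸ u.asIdeal)
    have hcard : Fintype.card (𝓞 F ⧸ u.asIdeal) = q := by rw [← Nat.card_eq_fintype_card]; exact hu
    rw [← Ideal.Quotient.eq, map_pow, ← hcard, FiniteField.pow_card]
  exact natCast_dvd_of_mem_of_mem hq hvw hv hw (hmem v (span_natCast_eq_inf_of_ne hq hvw hv hw).2)
    (hmem w (span_natCast_eq_inf_of_ne hq hvw.symm hw hv).2)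

end PrimesAbove

section UnitRank

variable {K : Type*} [Field K] [NumberField K]

theorem finrank_add_nrRealPlaces_eq :
    Module.finrank ℚ K + InfinitePlace.nrRealPlaces K = 2 * (Units.rank K + 1) := by
  have h1 := InfinitePlace.card_add_two_mul_card_eq_rank K
  have h2 := InfinitePlace.card_eq_nrRealPlaces_add_nrComplexPlaces K
  have h3 := Fintype.card_pos (α := InfinitePlace K)
  rw [Units.rank]
  omega

theorem two_le_nrRealPlaces_of_ne {f g : K →+* ℝ} (hfg : f ≠ g) :
    2 ≤ InfinitePlace.nrRealPlaces K := by
  classical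
  rw [← InfinitePlace.card_real_embeddings, Nat.succ_le_iff, Fintype.one_lt_card_iff]
  have hreal (h : K →+* ℝ) : ComplexEmbedding.IsReal (Complex.ofRealHom.comp h) := by
    ext x
    simp
  refine ⟨⟨_, hreal f⟩, ⟨_, hreal g⟩, fun h ↦ hfg (RingHom.ext fun x ↦ ?_)⟩
  exact Complex.ofReal_injective (DFunLike.congr_fun (Subtype.ext_iff.mp h) x)

end UnitRank

theorem not_isSquare_ratCast_of_prime {p : ℕ} (hp : p.Prime) : ¬ IsSquare (p : ℚ) := by
  rw [Rat.isSquare_natCast_iff]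
  exact hp.prime.irreducible.not_isSquare

theorem prime_natCast_ringOfIntegers_rat {p : ℕ} (hp : p.Prime) : Prime (p : 𝓞 ℚ) := by
  rw [← MulEquiv.prime_iff Rat.ringOfIntegersEquiv, map_natCast]
  exact Nat.prime_iff_prime_int.mp hp

theorem rat_sq_sub_prime_mul_sq_ne_neg_one {p : ℕ} (hp : p.Prime) (h3 : p % 4 = 3) (x y : ℚ) :
    x ^ 2 - p * y ^ 2 ≠ -1 := by
  intro h
  have hXY : (x.num * y.den) ^ 2 + (x.den * y.den : ℤ) ^ 2 = p * (y.num * x.den) ^ 2 := by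
    have hx : (x.num : ℚ) = x * x.den := (Rat.mul_den_eq_num x).symm
    have hy : (y.num : ℚ) = y * y.den := (Rat.mul_den_eq_num y).symm
    have : (x.num * y.den : ℚ) ^ 2 + (x.den * y.den : ℚ) ^ 2 = p * (y.num * x.den : ℚ) ^ 2 := by
      rw [hx, hy]
      linear_combination (x.den * y.den : ℚ) ^ 2 * h
    exact_mod_cast this
  have hN : p * (y.num * x.den).natAbs ^ 2 =
      (x.num * y.den).natAbs ^ 2 + (x.den * y.den : ℤ).natAbs ^ 2 := by
    zify
    simpa only [sq_abs] using hXY.symm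
  have hY : (y.num * x.den).natAbs ≠ 0 := by
    intro h0
    have hden : (x.den * y.den : ℤ).natAbs ≠ 0 := by simp
    have := pow_pos (Nat.pos_of_ne_zero hden) 2
    simp only [h0, ne_eq, OfNat.ofNat_ne_zero, not_false_eq_true, zero_pow, mul_zero] at hN
    omega
  have := Fact.mk hp
  have heven := Nat.eq_sq_add_sq_iff.mp ⟨_, _, hN⟩ (q := p)
    (hp.mem_primeFactors (dvd_mul_right _ _) (mul_ne_zero hp.ne_zero (pow_ne_zero 2 hY))) h3
  rw [padicValNat.mul hp.ne_zero (pow_ne_zero _ hY), padicValNat.pow,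
    padicValNat_self] at heven
  obtain ⟨m, hm⟩ := heven
  omega

section QuadraticField

variable {k : Type*} [Field k] [NumberField k] [Algebra.IsQuadraticExtension ℚ k] {p : ℕ}
  {s : 𝓞 k}

omit [Algebra.IsQuadraticExtension ℚ k] in
theorem coe_sq_eq_algebraMap_natCast (hs : s ^ 2 = p) : (s : k) ^ 2 = algebraMap ℚ k p := by
  rw [← map_pow, hs, map_natCast, map_natCast]

theorem card_selmerTwo_le_four (hp : p.Prime) (hs : s ^ 2 = p) :
    Nat.card (selmerTwo k) ≤ 4 := by
  have hθ := coe_sq_eq_algebraMap_natCast hs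
  have hθ' : (s : k) ^ 2 = algebraMap ℚ k ((p : 𝓞 ℚ) : ℚ) :=
    hθ.trans (congrArg _ (map_natCast (algebraMap (𝓞 ℚ) ℚ) p).symm)
  have key (T) := card_selmerTwo_le_sq (T := T) hθ' (prime_natCast_ringOfIntegers_rat hp)
  rw [card_selmerTwo_rat] at key
  have hmod := hp.eq_two_or_odd
  obtain rfl | h1 | h3 : p = 2 ∨ p % 4 = 1 ∨ p % 4 = 3 := by omega
  · exact key ∅ (fun v _ h2 h2' ↦ absurd (by exact_mod_cast h2') h2) (.inl rfl)
  · refine key ∅ (fun v _ _ _ ↦ ⟨1, 1, v.isPrime.one_notMem, -(p / 4 : ℕ), ?_⟩) (.inl rfl)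
    have : (p : 𝓞 ℚ) = 4 * (p / 4 : ℕ) + 1 := by exact_mod_cast (by omega : p = 4 * (p / 4) + 1)
    linear_combination -this
  · refine key {v | 2 ∈ v.asIdeal} (fun v hv _ h2 ↦ absurd h2 hv) (.inr ⟨?_, fun α hα ↦ ?_⟩)
    · exact subsingleton_setOf_mem_asIdeal
        (by exact_mod_cast prime_natCast_ringOfIntegers_rat Nat.prime_two)
    · have hsq := not_isSquare_ratCast_of_prime hp
      obtain ⟨x, y, rfl⟩ := exists_eq_add_mul_sqrt hθ hsq α
      rw [norm_add_mul_sqrt hθ hsq] at hα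
      exact rat_sq_sub_prime_mul_sq_ne_neg_one hp h3 x y hα

theorem prime_of_sq_eq_prime (hp : p.Prime) (hs : s ^ 2 = p) : Prime s := by
  have hθ := coe_sq_eq_algebraMap_natCast hs
  have hnorm : Algebra.norm ℤ s = -p := by
    have h := norm_add_mul_sqrt hθ (not_isSquare_ratCast_of_prime hp) 0 1
    rw [map_zero, map_one, zero_add, one_mul, ← Algebra.coe_norm_int] at h
    have : ((Algebra.norm ℤ s : ℤ) : ℚ) = (-p : ℤ) := by simpa using h
    exact_mod_cast this
  refine Ideal.prime_of_irreducible_absNorm_span ?_ ?_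
  · rintro rfl
    exact hp.ne_zero (by exact_mod_cast (by simpa using hs.symm : (p : 𝓞 k) = 0))
  · rw [Ideal.absNorm_span_singleton, hnorm, Int.natAbs_neg, Int.natAbs_natCast]
    exact hp.prime.irreducible

omit [Algebra.IsQuadraticExtension ℚ k] in
theorem exists_two_mul_eq_one_add_sqrt {m : ℕ} (hm : p = 4 * m + 1) (hs : s ^ 2 = p) :
    ∃ ω : 𝓞 k, 2 * ω = 1 + s ∧ ω ^ 2 - ω = m := by
  have hθ : (s : k) ^ 2 = algebraMap ℚ k ((p : 𝓞 ℚ) : ℚ) :=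
    (coe_sq_eq_algebraMap_natCast hs).trans
      (congrArg _ (map_natCast (algebraMap (𝓞 ℚ) ℚ) p).symm)
  have hn : (1 : 𝓞 ℚ) ^ 2 - 1 ^ 2 * p = 4 * (-m : 𝓞 ℚ) := by
    rw [hm]
    push_cast
    ring
  obtain ⟨ω, hω, hωs⟩ := exists_root_quadratic_of_eq_four_mul hθ hn
  refine ⟨ω, ?_, ?_⟩
  · apply FaithfulSMul.algebraMap_injective (𝓞 k) k
    rw [map_mul, map_add, map_one, map_ofNat]
    simp only [map_one, one_mul] at hωs
    linear_combination hωs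
  · simp only [map_add, map_neg, map_natCast, map_one, map_pow, map_sub, one_mul, aeval_X] at hω
    linear_combination hω

theorem subsingleton_setOf_two_mem_of_mod_four_eq_three (hp : p.Prime) (h3 : p % 4 = 3)
    (hs : s ^ 2 = p) : {v : HeightOneSpectrum (𝓞 k) | 2 ∈ v.asIdeal}.Subsingleton := by
  intro v hv w hw
  by_contra hne
  have hdvd : (2 : 𝓞 k) ∣ p - s := by
    rw [← hs]
    exact_mod_cast natCast_dvd_pow_sub_self_of_ne Nat.prime_two hne (by exact_mod_cast hv)
      (by exact_mod_cast hw) s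
  have hθ := coe_sq_eq_algebraMap_natCast hs
  have hnorm : Algebra.norm ℤ (p - s) = p ^ 2 - p := by
    have h := norm_add_mul_sqrt hθ (not_isSquare_ratCast_of_prime hp) p (-1)
    have hcoe : algebraMap ℚ k p + algebraMap ℚ k (-1) * s = ((p - s : 𝓞 k) : k) := by
      simp [sub_eq_add_neg]
    rw [hcoe, ← Algebra.coe_norm_int] at h
    have : ((Algebra.norm ℤ (p - s) : ℤ) : ℚ) = (p ^ 2 - p : ℤ) := by
      rw [h]
      push_cast
      ring
    exact_mod_cast this
  have h4 : 4 ∣ Algebra.norm ℤ (p - s) := by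
    have h2 := Algebra.norm_natCast ℤ (S := 𝓞 k) 2
    rw [RingOfIntegers.rank, Algebra.IsQuadraticExtension.finrank_eq_two] at h2
    have := map_dvd (Algebra.norm ℤ) hdvd
    rwa [← Nat.cast_ofNat, h2] at this
  rw [hnorm] at h4
  obtain ⟨m, rfl⟩ : ∃ m, p = 4 * m + 3 := ⟨p / 4, by omega⟩
  have : ((4 * m + 3 : ℕ) : ℤ) ^ 2 - (4 * m + 3 : ℕ) = 4 * (4 * m ^ 2 + 5 * m + 1) + 2 := by
    push_cast
    ring
  omega

theorem subsingleton_setOf_two_mem_of_mod_eight_eq_five (h5 : p % 8 = 5)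
    (hs : s ^ 2 = p) : {v : HeightOneSpectrum (𝓞 k) | 2 ∈ v.asIdeal}.Subsingleton := by
  intro v hv w hw
  by_contra hne
  obtain ⟨m, hm⟩ : ∃ m, p = 4 * (2 * m + 1) + 1 := ⟨p / 8, by omega⟩
  obtain ⟨ω, -, hω⟩ := exists_two_mul_eq_one_add_sqrt hm hs
  have hdvd : (2 : 𝓞 k) ∣ (2 * m + 1 : ℕ) := by
    rw [← hω]
    exact_mod_cast natCast_dvd_pow_sub_self_of_ne Nat.prime_two hne (by exact_mod_cast hv)
      (by exact_mod_cast hw) ω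
  have h1 : (1 : 𝓞 k) ∈ v.asIdeal := by
    have := v.asIdeal.sub_mem (v.asIdeal.mem_of_dvd hdvd hv) (v.asIdeal.mul_mem_right (m : 𝓞 k) hv)
    simpa using this
  exact v.isPrime.one_notMem h1

theorem subsingleton_setOf_two_mem_and_mem (hp : p.Prime) (hs : s ^ 2 = p) {ω : 𝓞 k}
    (hω : 2 * ω = 1 + s) :
    {v : HeightOneSpectrum (𝓞 k) | 2 ∈ v.asIdeal ∧ ω ∈ v.asIdeal}.Subsingleton := by
  intro v hv w hw
  by_contra hne
  obtain ⟨t, rfl⟩ : (2 : 𝓞 k) ∣ ω := by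
    exact_mod_cast natCast_dvd_of_mem_of_mem Nat.prime_two hne (by exact_mod_cast hv.1)
      (by exact_mod_cast hw.1) hv.2 hw.2
  have htrace : Algebra.trace ℤ (𝓞 k) (2 * t) = 1 := by
    have h := trace_add_mul_sqrt (coe_sq_eq_algebraMap_natCast hs)
      (not_isSquare_ratCast_of_prime hp) (1 / 2) (1 / 2)
    have hcoe : algebraMap ℚ k (1 / 2) + algebraMap ℚ k (1 / 2) * s = ((2 * t : 𝓞 k) : k) := by
      have := congrArg (algebraMap (𝓞 k) k) hω
      simp only [map_mul, map_add, map_ofNat, map_one] at this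
      simp only [map_div₀, map_one, map_ofNat, map_mul]
      linear_combination -this / 2
    rw [hcoe, ← Algebra.coe_trace_int] at h
    have : ((Algebra.trace ℤ (𝓞 k) (2 * t) : ℤ) : ℚ) = (1 : ℤ) := by rw [h]; norm_num
    exact_mod_cast this
  rw [two_mul, map_add] at htrace
  omega

theorem exists_subsingleton_forall_isSquareModFourAt_sqrt (hp : p.Prime) (hs : s ^ 2 = p) :
    ∃ T : Set (HeightOneSpectrum (𝓞 k)), T.Subsingleton ∧
      ∀ v ∉ T, s ∉ v.asIdeal → 2 ∈ v.asIdeal → IsSquareModFourAt s v := by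
  have hmod := hp.eq_two_or_odd
  obtain rfl | h3 | h5 | h1 : p = 2 ∨ p % 4 = 3 ∨ p % 8 = 5 ∨ p % 8 = 1 := by omega
  · refine ⟨∅, Set.subsingleton_empty, fun v _ hsv h2 ↦ absurd (v.isPrime.mem_of_pow_mem 2 ?_) hsv⟩
    rwa [hs, Nat.cast_ofNat]
  · exact ⟨{v | 2 ∈ v.asIdeal}, subsingleton_setOf_two_mem_of_mod_four_eq_three hp h3 hs,
      fun v hv _ h2 ↦ absurd h2 hv⟩
  · exact ⟨{v | 2 ∈ v.asIdeal}, subsingleton_setOf_two_mem_of_mod_eight_eq_five h5 hs,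
      fun v hv _ h2 ↦ absurd h2 hv⟩
  · obtain ⟨m, hm⟩ : ∃ m, p = 4 * (2 * m) + 1 := ⟨p / 8, by omega⟩
    obtain ⟨ω, hω, hω'⟩ := exists_two_mul_eq_one_add_sqrt hm hs
    refine ⟨{v | 2 ∈ v.asIdeal ∧ ω ∈ v.asIdeal}, subsingleton_setOf_two_mem_and_mem hp hs hω,
      fun v hv _ h2 ↦ ⟨ω, ω, fun hωv ↦ hv ⟨h2, hωv⟩, -(m * ω), ?_⟩⟩
    push_cast at hω'
    linear_combination (-2 * ω) * hω' + ω ^ 2 * hω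

theorem norm_ne_neg_one_of_sq_eq_sqrt {K : Type*} [Field K] [Algebra k K]
    [Algebra.IsQuadraticExtension k K] {θ : K} (hp : p.Prime) (hs : s ^ 2 = p)
    (hθ : θ ^ 2 = algebraMap k K s) (α : K) : Algebra.norm k α ≠ -1 := by
  intro hα
  have hsq : ¬ IsSquare (s : k) := not_isSquare_algebraMap_of_prime (prime_of_sq_eq_prime hp hs)
  obtain ⟨φ, hφ⟩ : ∃ φ : k →ₐ[ℚ] ℝ, φ s = -√p :=
    exists_algHom_sqrt (coe_sq_eq_algebraMap_natCast hs) (not_isSquare_ratCast_of_prime hp)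
      (by simp)
  obtain ⟨x, y, rfl⟩ := exists_eq_add_mul_sqrt hθ hsq α
  rw [norm_add_mul_sqrt hθ hsq] at hα
  have h : φ x ^ 2 + √p * φ y ^ 2 = -1 := by
    simpa [hφ] using congrArg φ hα
  have : 0 ≤ φ x ^ 2 + √p * φ y ^ 2 := by positivity
  linarith

theorem card_selmerTwo_le_sixteen {K : Type*} [Field K] [NumberField K] [Algebra k K]
    [Algebra.IsQuadraticExtension k K] {θ : K} (hp : p.Prime) (hs : s ^ 2 = p)
    (hθ : θ ^ 2 = algebraMap k K s) : Nat.card (selmerTwo K) ≤ 16 := by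
  obtain ⟨T, hT, hsT⟩ := exists_subsingleton_forall_isSquareModFourAt_sqrt hp hs
  calc Nat.card (selmerTwo K)
      ≤ Nat.card (selmerTwo k) ^ 2 :=
        card_selmerTwo_le_sq hθ (prime_of_sq_eq_prime hp hs) hsT
          (.inr ⟨hT, norm_ne_neg_one_of_sq_eq_sqrt hp hs hθ⟩)
    _ ≤ 4 ^ 2 := Nat.pow_le_pow_left (card_selmerTwo_le_four hp hs) 2

theorem exists_ringHom_real_ne {K : Type*} [Field K] [Algebra k K]
    [Algebra.IsQuadraticExtension k K] {θ : K} (hp : p.Prime) (hs : s ^ 2 = p)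
    (hθ : θ ^ 2 = algebraMap k K s) : ∃ f g : K →+* ℝ, f ≠ g := by
  have hsq : ¬ IsSquare (s : k) := not_isSquare_algebraMap_of_prime (prime_of_sq_eq_prime hp hs)
  obtain ⟨φ, hφ⟩ : ∃ φ : k →ₐ[ℚ] ℝ, φ s = √p :=
    exists_algHom_sqrt (coe_sq_eq_algebraMap_natCast hs) (not_isSquare_ratCast_of_prime hp)
      (by simp)
  algebraize [φ.toRingHom]
  have hφs : algebraMap k ℝ s = √p := hφ
  obtain ⟨f, hf⟩ : ∃ f : K →ₐ[k] ℝ, f θ = √√p :=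
    exists_algHom_sqrt hθ hsq (by rw [hφs, Real.sq_sqrt (Real.sqrt_nonneg _)])
  obtain ⟨g, hg⟩ : ∃ g : K →ₐ[k] ℝ, g θ = -√√p :=
    exists_algHom_sqrt hθ hsq (by rw [hφs, neg_sq, Real.sq_sqrt (Real.sqrt_nonneg _)])
  refine ⟨f, g, fun hfg ↦ ?_⟩
  have hpos : 0 < √√(p : ℝ) := Real.sqrt_pos.2 (Real.sqrt_pos.2 (by exact_mod_cast hp.pos))
  have hθfg : f θ = g θ := DFunLike.congr_fun hfg θ
  linarith

end QuadraticField

section PureQuarticField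

theorem card_ker_powMonoidHom_two_classGroup_le_two {k K : Type*} [Field k] [NumberField k]
    [Algebra.IsQuadraticExtension ℚ k] [Field K] [NumberField K] [Algebra k K]
    [Algebra.IsQuadraticExtension k K] {p : ℕ} {s : 𝓞 k} {θ : K} (hp : p.Prime)
    (hs : s ^ 2 = p) (hθ : θ ^ 2 = algebraMap k K s) :
    Nat.card (powMonoidHom 2 : ClassGroup (𝓞 K) →* ClassGroup (𝓞 K)).ker ≤ 2 := by
  have hfinrank : Module.finrank ℚ K = 4 := by
    rw [← Module.finrank_mul_finrank ℚ k K, Algebra.IsQuadraticExtension.finrank_eq_two,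
      Algebra.IsQuadraticExtension.finrank_eq_two]
  obtain ⟨f, g, hfg⟩ := exists_ringHom_real_ne hp hs hθ
  have hrank : 2 ≤ Units.rank K := by
    have h1 := finrank_add_nrRealPlaces_eq (K := K)
    have h2 := two_le_nrRealPlaces_of_ne hfg
    omega
  refine Nat.le_of_mul_le_mul_left (c := 2 ^ 3) ?_ (by norm_num)
  calc 2 ^ 3 * Nat.card (powMonoidHom 2 : ClassGroup (𝓞 K) →* ClassGroup (𝓞 K)).ker
      ≤ 2 ^ (Units.rank K + 1) *
          Nat.card (powMonoidHom 2 : ClassGroup (𝓞 K) →* ClassGroup (𝓞 K)).ker := by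
        gcongr <;> omega
    _ = Nat.card (selmerTwo K) := (card_selmerTwo K).symm
    _ ≤ 2 ^ 3 * 2 := card_selmerTwo_le_sixteen hp hs hθ

theorem exists_ringOfIntegers_pow_eq_natCast {k : Type*} [Field k] {n m : ℕ} (hn : 0 < n) {x : k}
    (hx : x ^ n = m) : ∃ s : 𝓞 k, (s : k) = x ∧ s ^ n = m := by
  have hint : IsIntegral ℤ x := .of_pow hn (hx ▸ isIntegral_natCast m)
  obtain ⟨s, rfl⟩ := (IsIntegralClosure.isIntegral_iff (A := 𝓞 k)).mp hint
  refine ⟨s, rfl, FaithfulSMul.algebraMap_injective (𝓞 k) k ?_⟩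
  rw [map_pow, hx, map_natCast]

theorem card_ker_powMonoidHom_two_classGroup_le_two_of_pow_four_eq {K : Type*} [Field K]
    [NumberField K] {p : ℕ} {θ : K} (hp : p.Prime) (hθ : θ ^ 4 = p)
    (hfinrank : Module.finrank ℚ K = 4) :
    Nat.card (powMonoidHom 2 : ClassGroup (𝓞 K) →* ClassGroup (𝓞 K)).ker ≤ 2 := by
  have hθ2 : (θ ^ 2) ^ 2 = algebraMap ℚ K p := by rw [← pow_mul, hθ, map_natCast]
  let k := ℚ⟮θ ^ 2⟯
  have : Algebra.IsQuadraticExtension ℚ k :=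
    isQuadraticExtension_adjoin_sqrt hθ2 (not_isSquare_ratCast_of_prime hp)
  have : Algebra.IsQuadraticExtension k K := ⟨by
    have h := Module.finrank_mul_finrank ℚ k K
    rw [hfinrank, Algebra.IsQuadraticExtension.finrank_eq_two] at h
    omega⟩
  have hgen : IntermediateField.AdjoinSimple.gen ℚ (θ ^ 2) ^ 2 = (p : k) :=
    Subtype.ext (by simpa using hθ2)
  obtain ⟨s, hs, hsp⟩ := exists_ringOfIntegers_pow_eq_natCast two_pos hgen
  exact card_ker_powMonoidHom_two_classGroup_le_two hp hsp (θ := θ) (by rw [hs]; rfl)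

theorem finrank_eq_of_algEquiv_adjoinRoot {F K : Type*} [Field F] [Field K] [Algebra F K]
    {f : F[X]} (e : K ≃ₐ[F] AdjoinRoot f) : Module.finrank F K = f.natDegree :=
  e.toLinearEquiv.finrank_eq.trans finrank_quotient_span_eq_natDegree

theorem exists_aeval_eq_zero_of_algEquiv_adjoinRoot {F K : Type*} [Field F] [Field K] [Algebra F K]
    {f : F[X]} (e : K ≃ₐ[F] AdjoinRoot f) : ∃ θ : K, aeval θ f = 0 :=
  ⟨e.symm (AdjoinRoot.root f), by rw [aeval_algHom_apply e.symm, AdjoinRoot.aeval_eq,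
    AdjoinRoot.mk_self, map_zero]⟩

end PureQuarticField

/-- For any prime `p`, the 2-primary part (Sylow 2-subgroup) of the ideal
class group of the pure quartic field `K = ℚ(⁴√p) = ℚ[x]/(x⁴ - p)` is cyclic. -/
theorem sylow_two_classGroup_pure_quartic_isCyclic
    (p : ℕ) (hp : p.Prime)
    (K : Type*) [Field K] [NumberField K]
    (hK : Nonempty (K ≃ₐ[ℚ] AdjoinRoot (X ^ 4 - C (p : ℚ)))) :
    ∀ P : Sylow 2 (ClassGroup (𝓞 K)), IsCyclic P := by
  obtain ⟨e⟩ := hK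
  obtain ⟨θ, hθ⟩ := exists_aeval_eq_zero_of_algEquiv_adjoinRoot e
  have hθ4 : θ ^ 4 = p := by simpa [sub_eq_zero] using hθ
  have hfinrank : Module.finrank ℚ K = 4 :=
    (finrank_eq_of_algEquiv_adjoinRoot e).trans natDegree_X_pow_sub_C
  exact sylow_isCyclic_of_card_ker_powMonoidHom_le
    (card_ker_powMonoidHom_two_classGroup_le_two_of_pow_four_eq hp hθ4 hfinrank)
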